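/- arXiv:2402.17885 — 4 statements merged into one kernel-verified Lean document; each statement's English description precedes it below -/
import Mathlib

section
/- Let E be a real inner product space, let X ⊆ E be a nonempty convex set whose diameter is bounded by Δ (i.e., ‖u − v‖ ≤ Δ for all u, v ∈ X), let x ∈ X, g ∈ E and ε > 0. If the distance from g to the set −N_X(x) (the negation of the normal cone to X at x) is at most ε, i.e., infDist(g, {y ∈ E | ∀ z ∈ X, ⟨y, z − x⟩ ≥ 0}) ≤ ε, then for every x' ∈ X one has ⟨x − x', g⟩ ≤ Δ·ε. -/
open RealInnerProductSpace

/-- If the distance from `g` to the negated normal cone of `X` at `x` is at most `ε`,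
then `⟪x - x', g⟫ ≤ Δ * ε` for every `x' ∈ X`, where `Δ` bounds the diameter of `X`. -/
theorem stmt_0 {E : Type*} [NormedAddCommGroup E] [InnerProductSpace ℝ E]
    (X : Set E) (hX : X.Nonempty) (hXconv : Convex ℝ X) (Δ : ℝ)
    (hdiam : ∀ u ∈ X, ∀ v ∈ X, ‖u - v‖ ≤ Δ)
    (x : E) (hx : x ∈ X) (g : E) (ε : ℝ) (hε : 0 < ε)
    (hdist : Metric.infDist g {y : E | ∀ z ∈ X, 0 ≤ ⟪y, z - x⟫} ≤ ε) :
    ∀ x' ∈ X, ⟪x - x', g⟫ ≤ Δ * ε := by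
  intro x' hx'
  have hΔ : 0 ≤ Δ := le_trans (norm_nonneg _) (hdiam x hx x hx)
  have hne : ({y : E | ∀ z ∈ X, 0 ≤ ⟪y, z - x⟫}).Nonempty :=
    ⟨0, fun z _ => by simp⟩
  refine le_of_forall_pos_le_add fun η hη => ?_
  have hδ : 0 < η / (Δ + 1) := by positivity
  obtain ⟨y, hy, hgy⟩ := (Metric.infDist_lt_iff hne).1
    (lt_of_le_of_lt hdist (lt_add_of_pos_right ε hδ))
  rw [dist_eq_norm] at hgy
  have h1 : ⟪x - x', g⟫ = ⟪x - x', g - y⟫ - ⟪y, x' - x⟫ := by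
    rw [inner_sub_right (x - x') g y, real_inner_comm, ← neg_sub x x', inner_neg_right,
      real_inner_comm y (x - x')]
    ring
  have h2 : 0 ≤ ⟪y, x' - x⟫ := hy x' hx'
  have h3 : ⟪x - x', g - y⟫ ≤ ‖x - x'‖ * ‖g - y‖ := real_inner_le_norm _ _
  have h4 : ‖x - x'‖ * ‖g - y‖ ≤ Δ * (ε + η / (Δ + 1)) :=
    mul_le_mul (hdiam x hx x' hx') hgy.le (norm_nonneg _) hΔ
  have h5 : (Δ + 1) * (η / (Δ + 1)) = η := by field_simp
  nlinarith
end

section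
/- Let E be a real inner product space, X ⊆ E a nonempty convex set, f : E → ℝ, and let x, u ∈ X, g ∈ E, μ > 0, ν > 0. Assume the strong-convexity subgradient inequality at x: for every y ∈ X, f(y) ≥ f(x) + ⟨g, y − x⟩ + (μ/2)·‖y − x‖². Let x⁺ ∈ X satisfy the variational characterization of the projection of x − ν·g onto X, namely ⟨(x − ν·g) − x⁺, y − x⁺⟩ ≤ 0 for all y ∈ X. Then ‖x⁺ − u‖² ≤ (1 − ν·μ)·‖x − u‖² − 2ν·(f(x) − f(u)) + ν²·‖g‖². -/
open RealInnerProductSpace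

/-- One-step inequality for a projected subgradient step on a `μ`-strongly convex
function over a convex set. -/
theorem stmt_3 {E : Type*} [NormedAddCommGroup E] [InnerProductSpace ℝ E]
    (X : Set E) (hXne : X.Nonempty) (hXconv : Convex ℝ X)
    (f : E → ℝ) (x u : E) (hx : x ∈ X) (hu : u ∈ X)
    (g : E) (μ ν : ℝ) (hμ : 0 < μ) (hν : 0 < ν)
    (hsc : ∀ y ∈ X, f x + ⟪g, y - x⟫ + μ / 2 * ‖y - x‖ ^ 2 ≤ f y)
    (xp : E) (hxp : xp ∈ X)
    (hproj : ∀ y ∈ X, ⟪(x - ν • g) - xp, y - xp⟫ ≤ 0) :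
    ‖xp - u‖ ^ 2 ≤ (1 - ν * μ) * ‖x - u‖ ^ 2 - 2 * ν * (f x - f u) + ν ^ 2 * ‖g‖ ^ 2 := by
  have h1 := hsc u hu
  have h2 := hproj u hu
  have e1 : ‖(x - u) - ν • g‖ ^ 2
      = ‖x - u‖ ^ 2 + 2 * ν * ⟪g, u - x⟫ + ν ^ 2 * ‖g‖ ^ 2 := by
    rw [norm_sub_sq_real, inner_smul_right, norm_smul, mul_pow, Real.norm_eq_abs, sq_abs,
      real_inner_comm, ← neg_sub u x, inner_neg_right, norm_neg]
    ring
  have e2 : ‖(x - u) - ν • g‖ ^ 2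
      = ‖(x - ν • g) - xp‖ ^ 2 - 2 * ⟪(x - ν • g) - xp, u - xp⟫ + ‖u - xp‖ ^ 2 := by
    rw [← norm_sub_sq_real]
    congr 2
    abel
  rw [norm_sub_rev u xp] at e2
  rw [norm_sub_rev u x] at h1
  have h3 := mul_le_mul_of_nonneg_left h1 hν.le
  have h4 := sq_nonneg ‖(x - ν • g) - xp‖
  linarith
end

section
/- Let I be a nonempty finite set with |I| = n ≥ 1, let B ⊆ I and M := I \ B. Let ρ, δ : I → ℝ be nonnegative, let g, F : I → ℝ, and let c ≥ 0 and R ∈ ℝ. Assume: (i) ∑_{k ∈ M} ρ(k)·g(k) + ∑_{k ∈ B} ρ(k)·F(k) ≤ R; (ii) for every k ∈ M, g(k) ≥ δ(k) − c; and (iii) for every k ∈ M, (n/2)·ρ(k)·δ(k) > R + c·∑_{j ∈ M} ρ(j). Then either 2·|B| ≥ n, or ∑_{k ∈ B} ρ(k)·F(k) ≤ 0. -/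
/-- Deterministic dichotomy underlying the analysis of the switching-gradient (CSA)
subroutine: either at least half of the iterations take objective steps, or the
weighted sum of objective optimality gaps over the objective steps is nonpositive. -/
theorem stmt_4 {ι : Type*} [DecidableEq ι] (I : Finset ι) (hIne : I.Nonempty)
    (n : ℕ) (hn : n = I.card) (hn1 : 1 ≤ n)
    (B : Finset ι) (hB : B ⊆ I) (M : Finset ι) (hM : M = I \ B)
    (ρ δ : ι → ℝ) (hρ : ∀ k, 0 ≤ ρ k) (hδ : ∀ k, 0 ≤ δ k)
    (g F : ι → ℝ) (c : ℝ) (hc : 0 ≤ c) (R : ℝ)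
    (hi : ∑ k ∈ M, ρ k * g k + ∑ k ∈ B, ρ k * F k ≤ R)
    (hii : ∀ k ∈ M, δ k - c ≤ g k)
    (hiii : ∀ k ∈ M, R + c * ∑ j ∈ M, ρ j < (n : ℝ) / 2 * (ρ k * δ k)) :
    n ≤ 2 * B.card ∨ ∑ k ∈ B, ρ k * F k ≤ 0 := by
  by_cases hcard : n ≤ 2 * B.card
  · exact Or.inl hcard
  right
  have hMB : M.card + B.card = n := by
    rw [hM, hn]; exact Finset.card_sdiff_add_card_eq_card hB
  have hMn : (n : ℝ) / 2 ≤ (M.card : ℝ) := by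
    have h : n ≤ 2 * M.card := by omega
    have h' : (n : ℝ) ≤ 2 * (M.card : ℝ) := by exact_mod_cast h
    linarith
  have hnpos : (0 : ℝ) < (n : ℝ) / 2 := by
    have : (1 : ℝ) ≤ (n : ℝ) := by exact_mod_cast hn1
    linarith
  have hT : 0 ≤ ∑ k ∈ M, ρ k * δ k :=
    Finset.sum_nonneg fun k _ => mul_nonneg (hρ k) (hδ k)
  have h1 : ∑ k ∈ M, ρ k * δ k - c * ∑ j ∈ M, ρ j ≤ ∑ k ∈ M, ρ k * g k := by
    rw [Finset.mul_sum, ← Finset.sum_sub_distrib]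
    refine Finset.sum_le_sum fun k hk => ?_
    have := mul_le_mul_of_nonneg_left (hii k hk) (hρ k)
    linarith
  have h2 : (M.card : ℝ) * (R + c * ∑ j ∈ M, ρ j) ≤ (n : ℝ) / 2 * ∑ k ∈ M, ρ k * δ k := by
    rw [Finset.mul_sum M _ ((n : ℝ) / 2), ← nsmul_eq_mul]
    exact Finset.card_nsmul_le_sum M _ _ fun k hk => (hiii k hk).le
  have h3 : R + c * ∑ j ∈ M, ρ j ≤ ∑ k ∈ M, ρ k * δ k := by
    by_contra hlt
    have hlt := not_le.mp hlt
    have h4 := mul_le_mul_of_nonneg_right hMn (hT.trans hlt.le)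
    have h5 := mul_lt_mul_of_pos_left hlt hnpos
    linarith
  linarith
end

section
/- Let ι be a nonempty finite index type, for each i ∈ ι let Eᵢ be a real normed vector space, and equip the product ∏_{i} Eᵢ with the ℓ² product norm ‖x‖ = (∑_i ‖x_i‖²)^{1/2}. Let L : ι → ℝ be nonnegative and let f : (∏_i Eᵢ) → ℝ satisfy the coordinatewise Lipschitz condition: for every i ∈ ι, every x ∈ ∏_i Eᵢ, and every yᵢ ∈ Eᵢ, |f(update(x, i, yᵢ)) − f(x)| ≤ L(i)·‖yᵢ − x_i‖, where update(x, i, yᵢ) replaces the i-th coordinate of x by yᵢ. Then f is Lipschitz on the product: for all x, y ∈ ∏_i Eᵢ, |f(x) − f(y)| ≤ (∑_i L(i)²)^{1/2} · ‖x − y‖. -/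
/-- A function on a finite product of normed spaces that is `L i`-Lipschitz in each
coordinate separately is `√(∑ i, L i ^ 2)`-Lipschitz with respect to the ℓ²
product norm. -/
theorem stmt_7 {ι : Type*} [Fintype ι] [Nonempty ι] [DecidableEq ι]
    {E : ι → Type*} [∀ i, NormedAddCommGroup (E i)] [∀ i, NormedSpace ℝ (E i)]
    (L : ι → ℝ) (hL : ∀ i, 0 ≤ L i)
    (f : (∀ i, E i) → ℝ)
    (hcoord : ∀ (i : ι) (x : ∀ i, E i) (y : E i),
      |f (Function.update x i y) - f x| ≤ L i * ‖y - x i‖) :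
    ∀ x y : ∀ i, E i,
      |f x - f y| ≤ Real.sqrt (∑ i, L i ^ 2) * Real.sqrt (∑ i, ‖x i - y i‖ ^ 2) := by
  intro x y
  have key : ∀ s : Finset ι, |f (s.piecewise x y) - f y| ≤ ∑ i ∈ s, L i * ‖x i - y i‖ := by
    intro s
    induction s using Finset.induction_on with
    | empty => simp
    | insert a s ha ih =>
      rw [Finset.piecewise_insert, Finset.sum_insert ha]
      have h := hcoord a (s.piecewise x y) (x a)
      rw [Finset.piecewise_eq_of_notMem s x y ha] at h
      have h2 := abs_sub_le (f (Function.update (s.piecewise x y) a (x a)))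
        (f (s.piecewise x y)) (f y)
      linarith
  have h := key Finset.univ
  rw [Finset.piecewise_univ] at h
  exact h.trans (Real.sum_mul_le_sqrt_mul_sqrt _ _ _)
end
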